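/- For every domain G ⊊ ℝⁿ (n ≥ 2) and every constant c with 0 < c ≤ 1, the function φ̃ᶜ_G(x,y) = |x−y| / (|x−y| + c(d_G(x) + d_G(y))) is a metric on G. -/

import Mathlib

/-- `f` is a metric on the subset `S`. -/
def IsMetricOn {E : Type*} (S : Set E) (f : E → E → ℝ) : Prop :=
  (∀ x ∈ S, ∀ y ∈ S, 0 ≤ f x y) ∧ (∀ x ∈ S, ∀ y ∈ S, (f x y = 0 ↔ x = y)) ∧
  (∀ x ∈ S, ∀ y ∈ S, f x y = f y x) ∧
  (∀ x ∈ S, ∀ y ∈ S, ∀ z ∈ S, f x y ≤ f x z + f z y)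

/-- The Euclidean distance from `x` to the boundary of `G` (equivalently, to the
complement of `G`, for open `G`). -/
noncomputable def distBd {n : ℕ} (G : Set (EuclideanSpace ℝ (Fin n)))
    (x : EuclideanSpace ℝ (Fin n)) : ℝ :=
  Metric.infDist x Gᶜ

/-!
For `0 < c ≤ 1` the function `c · d_G` is positive and 1-Lipschitz on `G`, and any such weight `u`
makes `|x - y| / (|x - y| + u x + u y)` a metric. For the triangle inequality through `z`, since
`t ↦ t / (t + s)` is increasing, `|x - y|` may be replaced by `|x - z| + |z - y|`; the fraction
then splits into two summands, and the Lipschitz bounds `u z ≤ u y + |z - y|` and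
`u z ≤ u x + |x - z|` show that their common denominator is at least that of each term on
the right-hand side.
-/

theorem div_add_le_div_add_of_le {K : Type*} [Field K] [LinearOrder K] [IsStrictOrderedRing K]
    {a b s : K} (ha : 0 ≤ a) (hs : 0 < s) (hab : a ≤ b) : a / (a + s) ≤ b / (b + s) := by
  have hb : 0 ≤ b := ha.trans hab
  rw [div_le_div_iff₀ (by positivity) (by positivity)]
  linear_combination s * hab

/-- The distance between two points relative to a weight `u`; the paper's `φ̃ᶜ_G` is the case where
`u` is `c` times the distance to the boundary of `G`. Where `u` vanishes, the diagonal value is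
`0 / 0 = 0`. -/
noncomputable def relativeDist {X : Type*} [Dist X] (u : X → ℝ) (x y : X) : ℝ :=
  dist x y / (dist x y + (u x + u y))

section RelativeDist

variable {X : Type*} [PseudoMetricSpace X]

theorem relativeDist_comm (u : X → ℝ) (x y : X) : relativeDist u x y = relativeDist u y x := by
  simp only [relativeDist, dist_comm x y, add_comm (u x)]

variable {u : X → ℝ} {x y z : X}

theorem relativeDist_nonneg (hx : 0 ≤ u x) (hy : 0 ≤ u y) : 0 ≤ relativeDist u x y := by
  unfold relativeDist
  positivity

theorem relativeDist_eq_zero_iff (hx : 0 ≤ u x) (hy : 0 ≤ u y) :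
    relativeDist u x y = 0 ↔ dist x y = 0 := by
  refine ⟨fun h ↦ ?_, fun h ↦ by rw [relativeDist, h, zero_div]⟩
  rcases div_eq_zero_iff.mp h with hdist | hdenom
  · exact hdist
  · linarith [dist_nonneg (x := x) (y := y)]

theorem relativeDist_triangle {s : Set X} (hu : LipschitzOnWith 1 u s) (hxs : x ∈ s) (hys : y ∈ s)
    (hzs : z ∈ s) (hx : 0 < u x) (hy : 0 < u y) :
    relativeDist u x y ≤ relativeDist u x z + relativeDist u z y := by
  have lipschitz {a b : X} (ha : a ∈ s) (hb : b ∈ s) : u a ≤ u b + dist a b := by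
    simpa only [NNReal.coe_one, one_mul] using hu.le_add_mul ha hb
  have hxz : u x ≤ u z + dist x z := lipschitz hxs hzs
  have hzx : u z ≤ u x + dist x z := dist_comm z x ▸ lipschitz hzs hxs
  have hyz : u y ≤ u z + dist z y := dist_comm y z ▸ lipschitz hys hzs
  have hzy : u z ≤ u y + dist z y := lipschitz hzs hys
  set D := dist x z + dist z y + (u x + u y)
  calc relativeDist u x y
      ≤ (dist x z + dist z y) / D :=
        div_add_le_div_add_of_le dist_nonneg (add_pos hx hy) (dist_triangle x z y)
    _ = dist x z / D + dist z y / D := add_div _ _ _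
    _ ≤ relativeDist u x z + relativeDist u z y := by
        unfold relativeDist
        gcongr ?_ + ?_
        · exact div_le_div_of_nonneg_left dist_nonneg (by linarith) (by linarith)
        · exact div_le_div_of_nonneg_left dist_nonneg (by linarith) (by linarith)

end RelativeDist

theorem isMetricOn_relativeDist {X : Type*} [MetricSpace X] {s : Set X} {u : X → ℝ}
    (hu : LipschitzOnWith 1 u s) (hpos : ∀ x ∈ s, 0 < u x) : IsMetricOn s (relativeDist u) :=
  ⟨fun x hx y hy ↦ relativeDist_nonneg (hpos x hx).le (hpos y hy).le,
    fun x hx y hy ↦ (relativeDist_eq_zero_iff (hpos x hx).le (hpos y hy).le).trans dist_eq_zero,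
    fun x _ y _ ↦ relativeDist_comm u x y,
    fun x hx y hy _ hz ↦ relativeDist_triangle hu hx hy hz (hpos x hx) (hpos y hy)⟩

theorem lipschitzWith_one_const_mul {X : Type*} [PseudoMetricSpace X] {f : X → ℝ}
    (hf : LipschitzWith 1 f) {c : ℝ} (hc : |c| ≤ 1) : LipschitzWith 1 fun x ↦ c * f x := by
  have hscale : ‖c‖₊ * 1 ≤ 1 := by
    rw [mul_one]
    exact hc
  exact ((lipschitzWith_smul c).comp hf).weaken hscale

theorem infDist_compl_pos {X : Type*} [PseudoMetricSpace X] {G : Set X} (hopen : IsOpen G)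
    (hproper : G ≠ Set.univ) {x : X} (hx : x ∈ G) : 0 < Metric.infDist x Gᶜ :=
  (hopen.isClosed_compl.notMem_iff_infDist_pos (Set.nonempty_compl.mpr hproper)).mp
    (Set.notMem_compl_iff.mpr hx)

theorem stmt2_general {X : Type*} [MetricSpace X] {G : Set X} (hopen : IsOpen G)
    (hproper : G ≠ Set.univ) {c : ℝ} (hc0 : 0 < c) (hc1 : c ≤ 1) :
    IsMetricOn G (fun x y ↦
      dist x y / (dist x y + c * (Metric.infDist x Gᶜ + Metric.infDist y Gᶜ))) := by
  have hlip : LipschitzOnWith 1 (fun x ↦ c * Metric.infDist x Gᶜ) G :=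
    (lipschitzWith_one_const_mul (Metric.lipschitz_infDist_pt Gᶜ)
      ((abs_of_pos hc0).trans_le hc1)).lipschitzOnWith
  have hpos : ∀ x ∈ G, 0 < c * Metric.infDist x Gᶜ :=
    fun x hx ↦ mul_pos hc0 (infDist_compl_pos hopen hproper hx)
  simp only [mul_add]
  exact isMetricOn_relativeDist hlip hpos

theorem stmt2 (n : ℕ) (hn : 2 ≤ n) (G : Set (EuclideanSpace ℝ (Fin n)))
    (hopen : IsOpen G) (hconn : IsConnected G) (hproper : G ≠ Set.univ)
    (c : ℝ) (hc0 : 0 < c) (hc1 : c ≤ 1) :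
    IsMetricOn G
      (fun x y => dist x y / (dist x y + c * (distBd G x + distBd G y))) :=
  stmt2_general hopen hproper hc0 hc1
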